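/- arXiv:math/0411028 — 6 statements merged into one kernel-verified Lean document; each statement's English description precedes it below -/
import Mathlib

section
/- Every circular 3G matching market of size 3 (three women, three men, three dogs) admits a stable matching. -/
/-! Write `f`, `g`, `h` for the maps sending each woman, man, dog to its favorite man, dog, woman.
An agent matched with its favorite never takes part in a blocking triple.

* Suppose two women `a₁`, `a₂` have distinct favorites `b₁`, `b₂`, and these men have distinct
  favorites `c₁`, `c₂`. Match `(a₁, b₁, c₁)`, `(a₂, b₂, c₂)` and the three remaining agents. Both
  `aᵢ` and both `bᵢ` are satisfied, so a blocking triple would have to contain the third woman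
  and the third man, who are already together: the matching is stable
  (`exists_stable_of_mFav_ne`).
* Otherwise `g ∘ f` is constant, hence so is `h ∘ g ∘ f`, which therefore has a fixed point: a
  triple of agents, each the favorite of the (cyclically) preceding one. Match this triple, and the
  rest arbitrarily into two triples. A blocking triple avoids the satisfied agents, so two of its
  members already share a triple, and one of these two does not improve: the matching is stable
  (`isStable_one_one_of_fav_zero`).

Relabelling the agents (`exists_stable_of_relabel`) brings both cases to a standard position.
-/

/-- A circular 3G matching market of size `N`: the women, the men and the dogs are each
indexed by `Fin N`.  `wpref a` is woman `a`'s strict preference list on the men, given as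
the bijection sending each position to the man in that position (position `0` = most
preferred); similarly `mpref b` is man `b`'s preference list on the dogs and `dpref c` is
dog `c`'s preference list on the women. -/
structure CircularMarket (N : ℕ) where
  wpref : Fin N → (Fin N ≃ Fin N)
  mpref : Fin N → (Fin N ≃ Fin N)
  dpref : Fin N → (Fin N ≃ Fin N)

namespace CircularMarket

variable {N : ℕ}

/-- Woman `a` strictly prefers man `b` to man `b'`. -/
def wPrefers (Mkt : CircularMarket N) (a b b' : Fin N) : Prop :=
  (Mkt.wpref a).symm b < (Mkt.wpref a).symm b'

/-- Man `b` strictly prefers dog `c` to dog `c'`. -/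
def mPrefers (Mkt : CircularMarket N) (b c c' : Fin N) : Prop :=
  (Mkt.mpref b).symm c < (Mkt.mpref b).symm c'

/-- Dog `c` strictly prefers woman `a` to woman `a'`. -/
def dPrefers (Mkt : CircularMarket N) (c a a' : Fin N) : Prop :=
  (Mkt.dpref c).symm a < (Mkt.dpref c).symm a'

/-- The favorite (most preferred) man of woman `a`. -/
def wFav (Mkt : CircularMarket N) (a : Fin N) : Fin N := Mkt.wpref a ⟨0, a.pos⟩

/-- The favorite dog of man `b`. -/
def mFav (Mkt : CircularMarket N) (b : Fin N) : Fin N := Mkt.mpref b ⟨0, b.pos⟩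

/-- The favorite woman of dog `c`. -/
def dFav (Mkt : CircularMarket N) (c : Fin N) : Fin N := Mkt.dpref c ⟨0, c.pos⟩

/-- A 3G matching is given by a pair of bijections: `σ` matching each woman to a man and
`τ` matching each man to a dog (so woman `a` is in the triple `(a, σ a, τ (σ a))`).
The triple `(a, b, c)` blocks the matching `(σ, τ)` if each of its members strictly
prefers its partner in the triple to its current partner in the matching. -/
def Blocks (Mkt : CircularMarket N) (σ τ : Equiv.Perm (Fin N)) (a b c : Fin N) : Prop :=
  Mkt.wPrefers a b (σ a) ∧ Mkt.mPrefers b c (τ b) ∧ Mkt.dPrefers c a (σ.symm (τ.symm c))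

/-- A matching is stable if no triple blocks it. -/
def IsStable (Mkt : CircularMarket N) (σ τ : Equiv.Perm (Fin N)) : Prop :=
  ∀ a b c : Fin N, ¬ Mkt.Blocks σ τ a b c

/-- The market in which the labels `a`, `b`, `c` stand for woman `α a`, man `β b` and dog `γ c`
of `Mkt`. -/
def relabel (Mkt : CircularMarket N) (α β γ : Equiv.Perm (Fin N)) : CircularMarket N where
  wpref a := (Mkt.wpref (α a)).trans β.symm
  mpref b := (Mkt.mpref (β b)).trans γ.symm
  dpref c := (Mkt.dpref (γ c)).trans α.symm

theorem exists_stable_of_relabel (Mkt : CircularMarket N) (α β γ : Equiv.Perm (Fin N))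
    (h : ∃ σ τ : Equiv.Perm (Fin N), (Mkt.relabel α β γ).IsStable σ τ) :
    ∃ σ τ : Equiv.Perm (Fin N), Mkt.IsStable σ τ := by
  obtain ⟨σ, τ, h⟩ := h
  refine ⟨(α.symm.trans σ).trans β, (β.symm.trans τ).trans γ,
    fun a b c hb => h (α.symm a) (β.symm b) (γ.symm c) ?_⟩
  simpa [Blocks, wPrefers, mPrefers, dPrefers, relabel] using hb

theorem not_wPrefers_wFav (Mkt : CircularMarket N) (a b : Fin N) :
    ¬ Mkt.wPrefers a b (Mkt.wFav a) := by
  simp [wPrefers, wFav, Fin.lt_def]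

theorem not_mPrefers_mFav (Mkt : CircularMarket N) (b c : Fin N) :
    ¬ Mkt.mPrefers b c (Mkt.mFav b) := by
  simp [mPrefers, mFav, Fin.lt_def]

theorem not_dPrefers_dFav (Mkt : CircularMarket N) (c a : Fin N) :
    ¬ Mkt.dPrefers c a (Mkt.dFav c) := by
  simp [dPrefers, dFav, Fin.lt_def]

/-- The identity matching is stable if women `0`, `1` and men `0`, `1` get their favorites, because
woman `2` is already matched with the only unsatisfied man. -/
theorem isStable_one_one (Mkt : CircularMarket 3) (hw0 : Mkt.wFav 0 = 0) (hw1 : Mkt.wFav 1 = 1)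
    (hm0 : Mkt.mFav 0 = 0) (hm1 : Mkt.mFav 1 = 1) : Mkt.IsStable 1 1 := by
  rintro a b c ⟨h1, h2, -⟩
  have w0 := Mkt.not_wPrefers_wFav 0 b
  have w1 := Mkt.not_wPrefers_wFav 1 b
  have m0 := Mkt.not_mPrefers_mFav 0 c
  have m1 := Mkt.not_mPrefers_mFav 1 c
  rw [hw0] at w0
  rw [hw1] at w1
  rw [hm0] at m0
  rw [hm1] at m1
  fin_cases a
  · exact w0 h1
  · exact w1 h1
  fin_cases b
  · exact m0 h2
  · exact m1 h2
  exact lt_irrefl _ h1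

theorem exists_perm_of_ne : ∀ x y : Fin 3, x ≠ y →
    ∃ π : Equiv.Perm (Fin 3), π 0 = x ∧ π 1 = y := by
  decide

theorem exists_stable_of_mFav_ne (Mkt : CircularMarket 3) (x y : Fin 3)
    (h : Mkt.mFav (Mkt.wFav x) ≠ Mkt.mFav (Mkt.wFav y)) :
    ∃ σ τ : Equiv.Perm (Fin 3), Mkt.IsStable σ τ := by
  have hb : Mkt.wFav x ≠ Mkt.wFav y := fun e => h (by rw [e])
  have ha : x ≠ y := fun e => h (by rw [e])
  obtain ⟨α, hα0, hα1⟩ := exists_perm_of_ne _ _ ha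
  obtain ⟨β, hβ0, hβ1⟩ := exists_perm_of_ne _ _ hb
  obtain ⟨γ, hγ0, hγ1⟩ := exists_perm_of_ne _ _ h
  refine Mkt.exists_stable_of_relabel α β γ ⟨1, 1, isStable_one_one _ ?_ ?_ ?_ ?_⟩
  · change β.symm (Mkt.wFav (α 0)) = 0
    rw [hα0, ← hβ0, Equiv.symm_apply_apply]
  · change β.symm (Mkt.wFav (α 1)) = 1
    rw [hα1, ← hβ1, Equiv.symm_apply_apply]
  · change γ.symm (Mkt.mFav (β 0)) = 0
    rw [hβ0, ← hγ0, Equiv.symm_apply_apply]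
  · change γ.symm (Mkt.mFav (β 1)) = 1
    rw [hβ1, ← hγ1, Equiv.symm_apply_apply]

/-- If the agents `0` are mutual favorites, the identity matching is stable: a blocking triple
would avoid them, so two of its three members would belong to the same triple of the matching;
any two members of a triple are cyclically adjacent, so one of them gains nothing. -/
theorem isStable_one_one_of_fav_zero (Mkt : CircularMarket 3) (hw : Mkt.wFav 0 = 0)
    (hm : Mkt.mFav 0 = 0) (hd : Mkt.dFav 0 = 0) : Mkt.IsStable 1 1 := by
  rintro a b c ⟨h1, h2, h3⟩
  change Mkt.wPrefers a b a at h1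
  change Mkt.mPrefers b c b at h2
  change Mkt.dPrefers c a c at h3
  have ha : a ≠ 0 := by
    rintro rfl
    exact Mkt.not_wPrefers_wFav 0 b (by rwa [hw])
  have hb : b ≠ 0 := by
    rintro rfl
    exact Mkt.not_mPrefers_mFav 0 c (by rwa [hm])
  have hc : c ≠ 0 := by
    rintro rfl
    exact Mkt.not_dPrefers_dFav 0 a (by rwa [hd])
  have hab : a ≠ b := by
    rintro rfl
    exact lt_irrefl _ h1
  have hbc : b ≠ c := by
    rintro rfl
    exact lt_irrefl _ h2
  have hca : c ≠ a := by
    rintro rfl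
    exact lt_irrefl _ h3
  omega

end CircularMarket

/-- Every circular 3G matching market of size 3 admits a stable matching. -/
theorem circular_3GSM_size_three_has_stable_matching (Mkt : CircularMarket 3) :
    ∃ σ τ : Equiv.Perm (Fin 3), Mkt.IsStable σ τ := by
  by_cases h : ∃ x, Mkt.mFav (Mkt.wFav x) ≠ Mkt.mFav (Mkt.wFav 0)
  · obtain ⟨x, hx⟩ := h
    exact Mkt.exists_stable_of_mFav_ne x 0 hx
  push Not at h
  -- The fixed point of the constant map `h ∘ g ∘ f`.
  let x := Mkt.dFav (Mkt.mFav (Mkt.wFav 0))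
  let y := Mkt.wFav x
  let z := Mkt.mFav y
  have hz : Mkt.dFav z = x := by
    change Mkt.dFav (Mkt.mFav (Mkt.wFav x)) = x
    rw [h x]
  refine Mkt.exists_stable_of_relabel (Equiv.swap 0 x) (Equiv.swap 0 y) (Equiv.swap 0 z)
    ⟨1, 1, CircularMarket.isStable_one_one_of_fav_zero _ ?_ ?_ ?_⟩
  · change (Equiv.swap 0 y).symm (Mkt.wFav (Equiv.swap 0 x 0)) = 0
    rw [Equiv.swap_apply_left]
    exact Equiv.swap_apply_right 0 y
  · change (Equiv.swap 0 z).symm (Mkt.mFav (Equiv.swap 0 y 0)) = 0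
    rw [Equiv.swap_apply_left]
    exact Equiv.swap_apply_right 0 z
  · change (Equiv.swap 0 x).symm (Mkt.dFav (Equiv.swap 0 z 0)) = 0
    rw [Equiv.swap_apply_left, hz]
    exact Equiv.swap_apply_right 0 x
end

section
/- Let a circular 3G matching market of size N contain a 111-triple (a,b,c), i.e., b is a's favorite man, c is b's favorite dog, and a is c's favorite woman. Let M' be any matching of the restricted market obtained by deleting a, b, c and restricting all remaining agents' preferences to the remaining agents, and suppose M' is stable for the restricted market. Then the matching of the full market consisting of the triple (a,b,c) together with the triples of M' is stable. -/
/-- If `(a, σ a, τ (σ a))` is a 111-triple (each member gets its favorite), and the rest of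
the matching `(σ, τ)` is a stable matching of the restricted market obtained by deleting
`a`, `σ a` and `τ (σ a)` (note that stability there means exactly that no triple formed
entirely of remaining agents blocks, since restricted preferences order remaining agents
exactly as the original ones do), then the full matching `(σ, τ)` is stable. -/
theorem stable_extension_of_111_triple {N : ℕ} (Mkt : CircularMarket N)
    (a : Fin N) (σ τ : Equiv.Perm (Fin N))
    (hb : σ a = Mkt.wFav a)
    (hc : τ (σ a) = Mkt.mFav (σ a))
    (ha : Mkt.dFav (τ (σ a)) = a)
    (hM' : ∀ a' b' c' : Fin N, a' ≠ a → b' ≠ σ a → c' ≠ τ (σ a) →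
      ¬ Mkt.Blocks σ τ a' b' c') :
    Mkt.IsStable σ τ := by
  intro a' b' c' h
  obtain ⟨hw, hm, hd⟩ := h
  -- A member of the 111-triple already sits at position `0` of its own list, so it cannot
  -- strictly improve; hence a blocking triple avoids all three and contradicts `hM'`.
  refine hM' a' b' c' ?_ ?_ ?_ ⟨hw, hm, hd⟩
  · rintro rfl
    rw [hb] at hw
    simp [CircularMarket.wPrefers, CircularMarket.wFav, Fin.lt_def] at hw
  · rintro rfl
    rw [hc] at hm
    simp [CircularMarket.mPrefers, CircularMarket.mFav, Fin.lt_def] at hm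
  · rintro rfl
    rw [Equiv.symm_apply_apply, Equiv.symm_apply_apply] at hd
    have h0 : (Mkt.dpref (τ (σ a))).symm a = ⟨0, (τ (σ a)).pos⟩ :=
      (Equiv.symm_apply_eq _).2 ha.symm
    simp [CircularMarket.dPrefers, h0, Fin.lt_def] at hd
end

section
/- In a circular 3G matching market of size 3, every matching that contains a 111-triple — a triple (a,b,c) such that b is a's favorite man, c is b's favorite dog, and a is c's favorite woman — is stable, regardless of how the other two triples are formed. -/
/-- In a circular 3G matching market of size 3, every matching containing a 111-triple
(a triple `(a, σ a, τ (σ a))` in which each member gets its favorite) is stable, no matter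
how the other two triples are formed. -/
theorem matching_with_111_triple_is_stable_size_three (Mkt : CircularMarket 3)
    (σ τ : Equiv.Perm (Fin 3)) (a : Fin 3)
    (hb : σ a = Mkt.wFav a)
    (hc : τ (σ a) = Mkt.mFav (σ a))
    (ha : Mkt.dFav (τ (σ a)) = a) :
    Mkt.IsStable σ τ := by
  intro x y z ⟨h₁, h₂, h₃⟩
  unfold CircularMarket.wFav at hb
  unfold CircularMarket.mFav at hc
  unfold CircularMarket.dFav at ha
  unfold CircularMarket.wPrefers at h₁
  unfold CircularMarket.mPrefers at h₂
  unfold CircularMarket.dPrefers at h₃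
  obtain ⟨u, rfl⟩ := σ.surjective y
  obtain ⟨v, rfl⟩ := (σ.trans τ).surjective z
  simp only [Equiv.trans_apply, Equiv.symm_apply_apply] at h₁ h₂ h₃
  -- An agent holding its favorite has its partner in position `0`, so it cannot improve.
  have hxa : x ≠ a := by
    rintro rfl
    rw [(Equiv.symm_apply_eq _).2 hb] at h₁
    exact Nat.not_lt_zero _ h₁
  have hua : u ≠ a := by
    rintro rfl
    rw [(Equiv.symm_apply_eq _).2 hc] at h₂
    exact Nat.not_lt_zero _ h₂
  have hva : v ≠ a := by
    rintro rfl
    rw [(Equiv.symm_apply_eq _).2 ha.symm] at h₃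
    exact Nat.not_lt_zero _ h₃
  have hxu : x ≠ u := by
    rintro rfl
    exact lt_irrefl _ h₁
  have huv : u ≠ v := by
    rintro rfl
    exact lt_irrefl _ h₂
  have hxv : x ≠ v := by
    rintro rfl
    exact lt_irrefl _ h₃
  omega
end

section
/- Consider a circular 3G matching market of size 4 containing no 111-triple. Let a1 be a woman, b1 her favorite man, c1 = b1's favorite dog, and suppose c1 ranks a1 second (so (a1,b1,c1) is a 112-triple). Let a2 be c1's favorite woman (so a2 ≠ a1), let b2 be a2's favorite man (then b2 ≠ b1), and let c2 be b2's favorite dog (then c2 ≠ c1). Let M' be a stable matching of the restricted market obtained by deleting a1, b1, c1, and suppose that in M' either a2 is matched with b2, or a2 is matched with her most-preferred man among the three remaining men other than b2 and b2 is matched with c2. Then the matching of the full market consisting of the triple (a1,b1,c1) together with the triples of M' is stable. -/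
/-- The 112-case of the size-4 proof: suppose there is no 111-triple, `(a1, b1, c1)` is a
112-triple (`b1` is `a1`'s favorite man, `c1` is `b1`'s favorite dog, and `c1` ranks `a1`
second), `a2` is `c1`'s favorite woman, `b2` is `a2`'s favorite man and `c2` is `b2`'s
favorite dog.  If `(σ, τ)` matches `a1` with `b1` and `b1` with `c1`, restricts to a
stable matching of the market obtained by deleting `a1`, `b1`, `c1` (no blocking triple
among the remaining agents), and in this restricted matching either `a2` gets `b2`, or
`a2` gets her most preferred man among the remaining men other than `b2` while `b2` gets
`c2`, then `(σ, τ)` is stable. -/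
theorem case_112_extension_is_stable (Mkt : CircularMarket 4)
    (hno111 : ∀ a : Fin 4, (Mkt.dpref (Mkt.mFav (Mkt.wFav a))).symm a ≠ 0)
    (a1 b1 c1 a2 b2 c2 : Fin 4)
    (hb1 : b1 = Mkt.wFav a1) (hc1 : c1 = Mkt.mFav b1)
    (h112 : (Mkt.dpref c1).symm a1 = 1)
    (ha2 : a2 = Mkt.dFav c1) (hb2 : b2 = Mkt.wFav a2) (hc2 : c2 = Mkt.mFav b2)
    (σ τ : Equiv.Perm (Fin 4))
    (hσ : σ a1 = b1) (hτ : τ b1 = c1)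
    (hM' : ∀ a' b' c' : Fin 4, a' ≠ a1 → b' ≠ b1 → c' ≠ c1 →
      ¬ Mkt.Blocks σ τ a' b' c')
    (halt : σ a2 = b2 ∨
      ((σ a2 ≠ b2 ∧ ∀ b' : Fin 4, b' ≠ b1 → b' ≠ b2 → ¬ Mkt.wPrefers a2 b' (σ a2)) ∧
        τ b2 = c2)) :
    Mkt.IsStable σ τ := by
  rintro a b c ⟨hw, hm, hd⟩
  have ha : a ≠ a1 := by
    rintro rfl
    rw [hσ, hb1] at hw
    exact Mkt.not_wPrefers_wFav _ _ hw
  have hb : b ≠ b1 := by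
    rintro rfl
    rw [hτ, hc1] at hm
    exact Mkt.not_mPrefers_mFav _ _ hm
  by_cases hc : c = c1
  · subst hc
    have hpartner : σ.symm (τ.symm c) = a1 := by
      rw [← hτ, ← hσ, Equiv.symm_apply_apply, Equiv.symm_apply_apply]
    -- `c1` ranks `a1` second, so the only woman it prefers to `a1` is its favorite, `a2`.
    have haa2 : a = a2 := by
      unfold CircularMarket.dPrefers at hd
      rw [hpartner, h112] at hd
      rw [ha2, CircularMarket.dFav, ← Equiv.symm_apply_eq]
      exact Fin.lt_one_iff _ |>.mp hd
    subst haa2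
    rcases halt with h | ⟨⟨-, hbest⟩, hτ2⟩
    · rw [h, hb2] at hw
      exact Mkt.not_wPrefers_wFav _ _ hw
    · by_cases hbb2 : b = b2
      · rw [hbb2, hτ2, hc2] at hm
        exact Mkt.not_mPrefers_mFav _ _ hm
      · exact hbest b hb hbb2 hw
  · exact hM' a b c ha hb hc ⟨hw, hm, hd⟩
end

section
/- There exists a 3G matching market of size 4 with weakest-link preferences (four women, four men, four dogs, each agent having a strict linear preference order on the 8 agents of the other two genders) that admits no stable matching. -/
/-!
The market is given by six explicit rank tables, one per ordered pair of genders. A matching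
`(σ, τ)` is recoded as the pair `f = σ`, `g = τ ∘ σ` of injective maps sending each woman to her
man and to her dog. Every triple then has the form `(a, f y, g z)`, where `y` and `z` are the
women matched to its man and its dog, so the blocking condition involves `f` and `g` only and no
inverse permutation (`blocks_of_womanBlocks`). That some triple blocks is then a finite check over
the 24² pairs of injective maps, carried out by kernel computation (`exists_womanBlocks_vec`).
-/

/-- A 3G matching market of size 4 where every agent has a strict linear preference order
on all 8 agents of the other two genders.  Women, men and dogs are each indexed by
`Fin 4`, and each agent's preference order is recorded as a ranking bijection: e.g.
`wrank a (Sum.inl b)` is the rank (in `Fin 8`, `0` = most preferred) that woman `a`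
assigns to man `b`, and `wrank a (Sum.inr c)` is the rank she assigns to dog `c`.
Similarly `mrank b` ranks women (`Sum.inl`) and dogs (`Sum.inr`) for man `b`, and
`drank c` ranks women (`Sum.inl`) and men (`Sum.inr`) for dog `c`. -/
structure TwoSidedPrefMarket4 where
  wrank : Fin 4 → ((Fin 4 ⊕ Fin 4) ≃ Fin 8)
  mrank : Fin 4 → ((Fin 4 ⊕ Fin 4) ≃ Fin 8)
  drank : Fin 4 → ((Fin 4 ⊕ Fin 4) ≃ Fin 8)

namespace TwoSidedPrefMarket4

/-- Under the weakest-link rule an agent compares triples by its least preferred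
(i.e. largest-rank) partner.  The triple `(a, b, c)` blocks the matching given by the
bijections `σ` (women to men) and `τ` (men to dogs) if each of `a`, `b`, `c` strictly
prefers, under the weakest-link rule, the triple `(a, b, c)` to its own triple in the
matching. -/
def Blocks (Mkt : TwoSidedPrefMarket4) (σ τ : Equiv.Perm (Fin 4)) (a b c : Fin 4) :
    Prop :=
  max (Mkt.wrank a (Sum.inl b)) (Mkt.wrank a (Sum.inr c)) <
      max (Mkt.wrank a (Sum.inl (σ a))) (Mkt.wrank a (Sum.inr (τ (σ a)))) ∧
  max (Mkt.mrank b (Sum.inl a)) (Mkt.mrank b (Sum.inr c)) <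
      max (Mkt.mrank b (Sum.inl (σ.symm b))) (Mkt.mrank b (Sum.inr (τ b))) ∧
  max (Mkt.drank c (Sum.inl a)) (Mkt.drank c (Sum.inr b)) <
      max (Mkt.drank c (Sum.inl (σ.symm (τ.symm c)))) (Mkt.drank c (Sum.inr (τ.symm c)))

/-- A matching is stable (under the weakest-link rule) if no triple blocks it. -/
def IsStable (Mkt : TwoSidedPrefMarket4) (σ τ : Equiv.Perm (Fin 4)) : Prop :=
  ∀ a b c : Fin 4, ¬ Mkt.Blocks σ τ a b c

end TwoSidedPrefMarket4

namespace TwoSidedPrefMarket4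

/-- The ranking of the eight possible partners whose value at the `i`-th agent of the first
partner gender is `u i`, and at the `i`-th agent of the second partner gender is `v i`. -/
noncomputable def mkRank (u v : Fin 4 → Fin 8)
    (h : Function.Bijective (Sum.elim u v)) : (Fin 4 ⊕ Fin 4) ≃ Fin 8 :=
  Equiv.ofBijective _ h

/-- Ranks of the men by the women: row `a` is the list of woman `a`. -/
def womanMan : Fin 4 → Fin 4 → Fin 8 :=
  ![![7, 3, 2, 0], ![3, 7, 2, 0], ![2, 3, 4, 5], ![6, 7, 1, 2]]

/-- Ranks of the dogs by the women. -/
def womanDog : Fin 4 → Fin 4 → Fin 8 :=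
  ![![1, 6, 4, 5], ![6, 1, 4, 5], ![6, 7, 1, 0], ![4, 3, 0, 5]]

/-- Ranks of the women by the men. -/
def manWoman : Fin 4 → Fin 4 → Fin 8 :=
  ![![7, 5, 4, 6], ![5, 7, 4, 6], ![7, 6, 0, 1], ![2, 3, 0, 7]]

/-- Ranks of the dogs by the men. -/
def manDog : Fin 4 → Fin 4 → Fin 8 :=
  ![![2, 1, 0, 3], ![1, 2, 0, 3], ![5, 4, 3, 2], ![5, 6, 4, 1]]

/-- Ranks of the women by the dogs. -/
def dogWoman : Fin 4 → Fin 4 → Fin 8 :=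
  ![![3, 1, 7, 5], ![1, 3, 7, 5], ![7, 6, 1, 2], ![3, 4, 0, 5]]

/-- Ranks of the men by the dogs. -/
def dogMan : Fin 4 → Fin 4 → Fin 8 :=
  ![![6, 4, 2, 0], ![4, 6, 2, 0], ![3, 4, 0, 5], ![6, 7, 1, 2]]

lemma woman_bijective : ∀ a, Function.Bijective (Sum.elim (womanMan a) (womanDog a)) := by
  decide +kernel

lemma man_bijective : ∀ b, Function.Bijective (Sum.elim (manWoman b) (manDog b)) := by
  decide +kernel

lemma dog_bijective : ∀ c, Function.Bijective (Sum.elim (dogWoman c) (dogMan c)) := by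
  decide +kernel

/-- The market without stable matchings. -/
noncomputable def badMarket : TwoSidedPrefMarket4 where
  wrank a := mkRank _ _ (woman_bijective a)
  mrank b := mkRank _ _ (man_bijective b)
  drank c := mkRank _ _ (dog_bijective c)

/-- The triple of woman `a`, the man of woman `y` and the dog of woman `z` blocks in
`badMarket` the matching that gives every woman `x` the man `f x` and the dog `g x`. -/
def WomanBlocks (f g : Fin 4 → Fin 4) (a y z : Fin 4) : Prop :=
  max (womanMan a (f y)) (womanDog a (g z)) < max (womanMan a (f a)) (womanDog a (g a)) ∧
  max (manWoman (f y) a) (manDog (f y) (g z)) <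
      max (manWoman (f y) y) (manDog (f y) (g y)) ∧
  max (dogWoman (g z) a) (dogMan (g z) (f y)) <
      max (dogWoman (g z) z) (dogMan (g z) (f z))

instance (f g : Fin 4 → Fin 4) (a y z : Fin 4) : Decidable (WomanBlocks f g a y z) :=
  inferInstanceAs (Decidable (_ ∧ _ ∧ _))

lemma blocks_of_womanBlocks (σ τ : Equiv.Perm (Fin 4)) (a y z : Fin 4)
    (h : WomanBlocks σ (fun x => τ (σ x)) a y z) :
    badMarket.Blocks σ τ a (σ y) (τ (σ z)) := by
  simpa [Blocks, badMarket, mkRank, WomanBlocks] using h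

/-- The finite check. The maps are written as vectors of their values, and the entries of the
first are constrained before those of the second are enumerated, which keeps the search short. -/
lemma exists_womanBlocks_vec :
    ∀ p q r s : Fin 4, (p ≠ q ∧ p ≠ r ∧ p ≠ s ∧ q ≠ r ∧ q ≠ s ∧ r ≠ s) →
    ∀ t u v w : Fin 4, (t ≠ u ∧ t ≠ v ∧ t ≠ w ∧ u ≠ v ∧ u ≠ w ∧ v ≠ w) →
    ∃ a y z, WomanBlocks ![p, q, r, s] ![t, u, v, w] a y z := by
  decide +kernel

lemma exists_womanBlocks (f g : Fin 4 → Fin 4) (hf : Function.Injective f)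
    (hg : Function.Injective g) : ∃ a y z, WomanBlocks f g a y z := by
  have key := exists_womanBlocks_vec (f 0) (f 1) (f 2) (f 3) (by simp [hf.eq_iff])
    (g 0) (g 1) (g 2) (g 3) (by simp [hg.eq_iff])
  have eta : ∀ k : Fin 4 → Fin 4, ![k 0, k 1, k 2, k 3] = k := fun k => by
    ext i; fin_cases i <;> rfl
  rwa [eta f, eta g] at key

end TwoSidedPrefMarket4

/-- There is a 3G matching market of size 4 which, under the weakest-link rule, admits no
stable matching. -/
theorem exists_weakest_link_market_without_stable_matching :
    ∃ Mkt : TwoSidedPrefMarket4, ∀ σ τ : Equiv.Perm (Fin 4), ¬ Mkt.IsStable σ τ := by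
  refine ⟨TwoSidedPrefMarket4.badMarket, fun σ τ hstable => ?_⟩
  obtain ⟨a, y, z, h⟩ := TwoSidedPrefMarket4.exists_womanBlocks σ (fun x => τ (σ x))
    σ.injective (τ.injective.comp σ.injective)
  exact hstable _ _ _ (TwoSidedPrefMarket4.blocks_of_womanBlocks σ τ a y z h)
end

section
/- There exists a circular 3G matching market of size 4 (four women, four men, four dogs) that admits no strongly stable matching. -/
/-- The triple `(a, b, c)` weakly blocks the matching `(σ, τ)` if every member weakly
prefers its partners in the triple to its partners in the matching and at least one member
gets a strictly better (hence different) partner. -/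
def CircularMarket.WeaklyBlocks {N : ℕ} (Mkt : CircularMarket N)
    (σ τ : Equiv.Perm (Fin N)) (a b c : Fin N) : Prop :=
  (Mkt.wpref a).symm b ≤ (Mkt.wpref a).symm (σ a) ∧
  (Mkt.mpref b).symm c ≤ (Mkt.mpref b).symm (τ b) ∧
  (Mkt.dpref c).symm a ≤ (Mkt.dpref c).symm (σ.symm (τ.symm c)) ∧
  (b ≠ σ a ∨ c ≠ τ b ∨ a ≠ σ.symm (τ.symm c))

/-- A matching is strongly stable if no triple weakly blocks it. -/
def CircularMarket.IsStronglyStable {N : ℕ} (Mkt : CircularMarket N)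
    (σ τ : Equiv.Perm (Fin N)) : Prop :=
  ∀ a b c : Fin N, ¬ Mkt.WeaklyBlocks σ τ a b c

/-- The preference list `l 0, l 1, l 2, l 3`, most preferred first; `r` gives the position of each
entry in the list. -/
def prefList (l r : Fin 4 → Fin 4) (hrl : ∀ i, r (l i) = i) (hlr : ∀ i, l (r i) = i) :
    Fin 4 ≃ Fin 4 :=
  ⟨l, r, hrl, hlr⟩

/-- A market of size 4 without strongly stable matchings. -/
def badMarket : CircularMarket 4 where
  wpref := ![prefList ![3, 0, 1, 2] ![1, 2, 3, 0] (by decide) (by decide),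
    prefList ![2, 1, 0, 3] ![2, 1, 0, 3] (by decide) (by decide),
    prefList ![3, 1, 2, 0] ![3, 1, 2, 0] (by decide) (by decide),
    prefList ![1, 2, 0, 3] ![2, 0, 1, 3] (by decide) (by decide)]
  mpref := ![prefList ![0, 3, 2, 1] ![0, 3, 2, 1] (by decide) (by decide),
    prefList ![0, 3, 1, 2] ![0, 2, 3, 1] (by decide) (by decide),
    prefList ![0, 3, 1, 2] ![0, 2, 3, 1] (by decide) (by decide),
    prefList ![2, 0, 1, 3] ![1, 2, 0, 3] (by decide) (by decide)]
  dpref := ![prefList ![2, 3, 0, 1] ![2, 3, 0, 1] (by decide) (by decide),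
    prefList ![0, 2, 3, 1] ![0, 3, 1, 2] (by decide) (by decide),
    prefList ![3, 0, 2, 1] ![1, 3, 2, 0] (by decide) (by decide),
    prefList ![0, 1, 3, 2] ![0, 1, 3, 2] (by decide) (by decide)]

/-- Triples (woman, man, dog) such that every matching of `badMarket` is weakly blocked by one
of them. -/
def blockingTriples : List (Fin 4 × Fin 4 × Fin 4) :=
  [(0, 3, 2), (2, 3, 0), (2, 1, 0), (0, 0, 3), (1, 2, 3), (3, 0, 2), (3, 1, 1), (3, 2, 1)]

theorem exists_blockingTriple (σ τ : Equiv.Perm (Fin 4)) :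
    ∃ t ∈ blockingTriples, badMarket.WeaklyBlocks σ τ t.1 t.2.1 t.2.2 := by
  unfold CircularMarket.WeaklyBlocks
  revert σ τ
  decide +kernel

/-- There is a circular 3G matching market of size 4 with no strongly stable matching. -/
theorem exists_circular_market_without_strongly_stable_matching :
    ∃ Mkt : CircularMarket 4, ∀ σ τ : Equiv.Perm (Fin 4),
      ¬ Mkt.IsStronglyStable σ τ := by
  refine ⟨badMarket, fun σ τ hM => ?_⟩
  obtain ⟨t, -, ht⟩ := exists_blockingTriple σ τ
  exact hM _ _ _ ht
end
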